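/- Let K ≥ 1 and ρ ≥ 1. Then (K² + 1)² − 4ρ(2 − ρ)K² ≥ 0, and K̃ := (K² + 1 + √((K²+1)² − 4ρ(2−ρ)K²))/(2ρK) satisfies 1 ≤ K̃ ≤ K; moreover, if K > 1 and ρ > 1 then 1 < K̃ < K. -/

import Mathlib

/-!
The number `K̃` is the larger root of `p(x) = ρK x² - (K² + 1) x + (2 - ρ)K`. Since
`p(1) = -(K - 1)²`, `p(K) = (ρ - 1) K (K² - 1)`, and `p'(K) ≥ 0`, the sign of `p`
at `1` and at `K` places `K̃` between them.
-/

section Quadratic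

variable {a b c x : ℝ}

/-- The larger root of `a x² + b x + c`, for `0 < a`. When the discriminant is negative the square
root is `0`, and this is the abscissa `-b / (2a)` of the vertex. -/
noncomputable def largerRoot (a b c : ℝ) : ℝ :=
  (-b + √(discrim a b c)) / (2 * a)

theorem sq_two_mul_mul_add_eq_discrim_add (a b c x : ℝ) :
    (2 * a * x + b) ^ 2 = discrim a b c + 4 * a * (a * (x * x) + b * x + c) := by
  rw [discrim]
  ring

theorem discrim_le_sq_iff (ha : 0 < a) :
    discrim a b c ≤ (2 * a * x + b) ^ 2 ↔ 0 ≤ a * (x * x) + b * x + c := by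
  rw [sq_two_mul_mul_add_eq_discrim_add a b c x, le_add_iff_nonneg_right,
    mul_nonneg_iff_of_pos_left (by positivity)]

theorem discrim_lt_sq_iff (ha : 0 < a) :
    discrim a b c < (2 * a * x + b) ^ 2 ↔ 0 < a * (x * x) + b * x + c := by
  rw [sq_two_mul_mul_add_eq_discrim_add a b c x, lt_add_iff_pos_right,
    mul_pos_iff_of_pos_left (by positivity)]

theorem largerRoot_le_iff (ha : 0 < a) :
    largerRoot a b c ≤ x ↔ 0 ≤ 2 * a * x + b ∧ 0 ≤ a * (x * x) + b * x + c := by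
  rw [← discrim_le_sq_iff ha, ← Real.sqrt_le_iff, largerRoot, div_le_iff₀' (by positivity),
    neg_add_le_iff_le_add, add_comm b]

theorem largerRoot_lt_iff (ha : 0 < a) :
    largerRoot a b c < x ↔ 0 < 2 * a * x + b ∧ 0 < a * (x * x) + b * x + c := by
  have sqrt_lt_iff (y : ℝ) : √(discrim a b c) < y ↔ 0 < y ∧ discrim a b c < y ^ 2 :=
    ⟨fun h ↦ have hy := (Real.sqrt_nonneg _).trans_lt h; ⟨hy, (Real.sqrt_lt' hy).mp h⟩,
      fun h ↦ (Real.sqrt_lt' h.1).mpr h.2⟩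
  rw [← discrim_lt_sq_iff ha, ← sqrt_lt_iff, largerRoot, div_lt_iff₀' (by positivity),
    neg_add_lt_iff_lt_add, add_comm b]

theorem le_largerRoot_of_nonpos (ha : 0 < a) (hx : a * (x * x) + b * x + c ≤ 0) :
    x ≤ largerRoot a b c :=
  not_lt.mp fun h ↦ hx.not_gt ((largerRoot_lt_iff ha).mp h).2

theorem lt_largerRoot_of_neg (ha : 0 < a) (hx : a * (x * x) + b * x + c < 0) :
    x < largerRoot a b c :=
  not_le.mp fun h ↦ hx.not_ge ((largerRoot_le_iff ha).mp h).2

end Quadratic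

section KTilde

variable {K ρ : ℝ}

/-- The number `K̃` of the theorem. The division gives the junk value `0` when `ρ * K = 0`. -/
noncomputable def kTilde (K ρ : ℝ) : ℝ :=
  (K ^ 2 + 1 + √((K ^ 2 + 1) ^ 2 - 4 * ρ * (2 - ρ) * K ^ 2)) / (2 * ρ * K)

theorem kTilde_discrim_nonneg (K ρ : ℝ) :
    0 ≤ (K ^ 2 + 1) ^ 2 - 4 * ρ * (2 - ρ) * K ^ 2 :=
  calc
    0 ≤ (K ^ 2 - 1) ^ 2 + (2 * K * (ρ - 1)) ^ 2 := by positivity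
    _ = (K ^ 2 + 1) ^ 2 - 4 * ρ * (2 - ρ) * K ^ 2 := by ring

theorem kTilde_eq_largerRoot (K ρ : ℝ) :
    kTilde K ρ = largerRoot (ρ * K) (-(K ^ 2 + 1)) ((2 - ρ) * K) := by
  rw [kTilde, largerRoot, discrim, neg_neg, mul_assoc 2 ρ K]
  congr 3
  ring

theorem kTilde_quadratic_one (K ρ : ℝ) :
    ρ * K * (1 * 1) + -(K ^ 2 + 1) * 1 + (2 - ρ) * K = -(K - 1) ^ 2 := by
  ring

theorem kTilde_quadratic_self (K ρ : ℝ) :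
    ρ * K * (K * K) + -(K ^ 2 + 1) * K + (2 - ρ) * K = (ρ - 1) * K * (K ^ 2 - 1) := by
  ring

theorem kTilde_quadratic_slope_self (K ρ : ℝ) :
    2 * (ρ * K) * K + -(K ^ 2 + 1) = (K ^ 2 - 1) + 2 * K ^ 2 * (ρ - 1) := by
  ring

theorem one_le_kTilde (hK : 0 < K) (hρ : 0 < ρ) : 1 ≤ kTilde K ρ := by
  rw [kTilde_eq_largerRoot]
  apply le_largerRoot_of_nonpos (mul_pos hρ hK)
  rw [kTilde_quadratic_one]
  exact neg_nonpos.mpr (sq_nonneg _)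

theorem one_lt_kTilde (hK : 0 < K) (hK1 : K ≠ 1) (hρ : 0 < ρ) : 1 < kTilde K ρ := by
  rw [kTilde_eq_largerRoot]
  apply lt_largerRoot_of_neg (mul_pos hρ hK)
  rw [kTilde_quadratic_one]
  exact neg_neg_of_pos (sq_pos_of_ne_zero (sub_ne_zero.mpr hK1))

theorem kTilde_le_self (hK : 1 ≤ K) (hρ : 1 ≤ ρ) : kTilde K ρ ≤ K := by
  have hK0 : 0 < K := one_pos.trans_le hK
  have hρ0 : 0 < ρ := one_pos.trans_le hρ
  have hK2 : 0 ≤ K ^ 2 - 1 := sub_nonneg.mpr (one_le_pow₀ hK)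
  have hρ1 : 0 ≤ ρ - 1 := sub_nonneg.mpr hρ
  rw [kTilde_eq_largerRoot, largerRoot_le_iff (mul_pos hρ0 hK0), kTilde_quadratic_slope_self,
    kTilde_quadratic_self]
  exact ⟨add_nonneg hK2 (mul_nonneg (by positivity) hρ1), mul_nonneg (mul_nonneg hρ1 hK0.le) hK2⟩

theorem kTilde_lt_self (hK : 1 < K) (hρ : 1 < ρ) : kTilde K ρ < K := by
  have hK0 : 0 < K := one_pos.trans hK
  have hρ0 : 0 < ρ := one_pos.trans hρ
  have hK2 : 0 < K ^ 2 - 1 := sub_pos.mpr (one_lt_pow₀ hK two_ne_zero)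
  have hρ1 : 0 < ρ - 1 := sub_pos.mpr hρ
  rw [kTilde_eq_largerRoot, largerRoot_lt_iff (mul_pos hρ0 hK0), kTilde_quadratic_slope_self,
    kTilde_quadratic_self]
  exact ⟨add_pos hK2 (mul_pos (by positivity) hρ1), mul_pos (mul_pos hρ1 hK0) hK2⟩

end KTilde

/-- For `K ≥ 1`, `ρ ≥ 1`: the discriminant `(K²+1)² − 4ρ(2−ρ)K²` is
nonnegative, and `K̃ = (K² + 1 + √((K²+1)² − 4ρ(2−ρ)K²))/(2ρK)` satisfies `1 ≤ K̃ ≤ K`;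
if moreover `K > 1` and `ρ > 1`, then `1 < K̃ < K`. -/
theorem kTilde_bounds (K ρ : ℝ) (hK : 1 ≤ K) (hρ : 1 ≤ ρ) :
    0 ≤ (K^2 + 1)^2 - 4*ρ*(2 - ρ)*K^2 ∧
      1 ≤ (K^2 + 1 + Real.sqrt ((K^2 + 1)^2 - 4*ρ*(2 - ρ)*K^2)) / (2*ρ*K) ∧
      (K^2 + 1 + Real.sqrt ((K^2 + 1)^2 - 4*ρ*(2 - ρ)*K^2)) / (2*ρ*K) ≤ K ∧
      (1 < K → 1 < ρ →
        1 < (K^2 + 1 + Real.sqrt ((K^2 + 1)^2 - 4*ρ*(2 - ρ)*K^2)) / (2*ρ*K) ∧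
        (K^2 + 1 + Real.sqrt ((K^2 + 1)^2 - 4*ρ*(2 - ρ)*K^2)) / (2*ρ*K) < K) := by
  have hK0 : 0 < K := one_pos.trans_le hK
  have hρ0 : 0 < ρ := one_pos.trans_le hρ
  exact ⟨kTilde_discrim_nonneg K ρ, one_le_kTilde hK0 hρ0, kTilde_le_self hK hρ,
    fun hK1 hρ1 ↦ ⟨one_lt_kTilde hK0 hK1.ne' hρ0, kTilde_lt_self hK1 hρ1⟩⟩
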